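/- Let d, M_α, M_β ≥ 1, let Ψ_α ∈ ℝ^{d×M_α} and Ψ_β ∈ ℝ^{d×M_β} be matrices, a ∈ ℝ^{M_α}, and let B ∈ ℝ^{M_β×M_β} be symmetric positive definite. Define q = N(Ψ_α a, (I + Ψ_β B Ψ_βᵀ)⁻¹) and p = N(0, I). Then KL(q ‖ p) = (1/2)·aᵀ K_α a + (1/2)·log det(I + K_β B) − (1/2)·tr( K_β (B⁻¹ + K_β)⁻¹ ). -/

import Mathlib

open Matrix MeasureTheory

/-- The multivariate Gaussian measure `N(μ, S)` on `ℝ^d`, defined by its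
density with respect to the Lebesgue measure. -/
noncomputable def multiGaussian {d : ℕ} (μ : Fin d → ℝ)
    (S : Matrix (Fin d) (Fin d) ℝ) : Measure (Fin d → ℝ) :=
  volume.withDensity fun x =>
    ENNReal.ofReal ((Real.sqrt ((2 * Real.pi) ^ d * S.det))⁻¹ *
      Real.exp (-(1 / 2 : ℝ) * ((x - μ) ⬝ᵥ S⁻¹.mulVec (x - μ))))

/-- The Kullback–Leibler divergence `∫ log (dq/dp) dq` between measures on
`ℝ^d` (for `q` absolutely continuous with respect to `p`). -/
noncomputable def klDiv {d : ℕ} (q p : Measure (Fin d → ℝ)) : ℝ :=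
  ∫ x, Real.log (q.rnDeriv p x).toReal ∂q

/-!
The log-likelihood ratio of two nondegenerate Gaussians is a difference of log-determinants plus a
difference of quadratic forms, and a random vector `X` with mean `m` and covariance `S` satisfies
`E[(X - c)ᵀ A (X - c)] = tr(A S) + (m - c)ᵀ A (m - c)`; integrating the former against the latter
gives the divergence between arbitrary nondegenerate Gaussians. The moments of `multiGaussian`
come from recognising it as the affine image of the standard Gaussian under `x ↦ m + √S x`.
For the covariance `(I + Ψβ B Ψβᵀ)⁻¹`, Sylvester's determinant identity and the Woodbury identity
turn the `d`-dimensional determinant and trace into expressions in `K_β`.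
-/

open ProbabilityTheory
open scoped MatrixOrder

section Woodbury

variable {R m n : Type*} [CommRing R] [Fintype m] [DecidableEq m] [Fintype n] [DecidableEq n]

lemma trace_inv_one_add_mul_mul (U : Matrix n m R) {C : Matrix m m R} (V : Matrix m n R)
    (hC : IsUnit C) (hCVU : IsUnit (C⁻¹ + V * U)) :
    (1 + U * C * V)⁻¹.trace = Fintype.card n - (V * U * (C⁻¹ + V * U)⁻¹).trace := by
  have hinv : (1 + U * C * V)⁻¹ = 1 - U * (C⁻¹ + V * U)⁻¹ * V := by
    simpa using add_mul_mul_inv_eq_sub 1 U C V isUnit_one hC (by simpa using hCVU)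
  rw [hinv, trace_sub, trace_one, trace_mul_comm, ← Matrix.mul_assoc]

end Woodbury

section WithDensity

variable {α β : Type*} [MeasurableSpace α] [MeasurableSpace β]

lemma withDensity_map {μ : Measure α} {T : α → β} (hT : Measurable T) {f : β → ENNReal}
    (hf : Measurable f) : (μ.map T).withDensity f = (μ.withDensity (f ∘ T)).map T := by
  ext s hs
  rw [withDensity_apply _ hs, Measure.map_apply hT hs, withDensity_apply _ (hT hs),
    setLIntegral_map hs hf hT]
  rfl

lemma llr_withDensity_ofReal {μ : Measure α} [SigmaFinite μ] {f g : α → ℝ}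
    (hf : Measurable f) (hg : Measurable g) (hf_pos : ∀ x, 0 < f x) (hg_pos : ∀ x, 0 < g x) :
    llr (μ.withDensity fun x ↦ ENNReal.ofReal (f x)) (μ.withDensity fun x ↦ ENNReal.ofReal (g x))
      =ᵐ[μ] fun x ↦ Real.log (f x) - Real.log (g x) := by
  have hfg := Measure.rnDeriv_withDensity_right
    (μ.withDensity fun x ↦ ENNReal.ofReal (f x)) μ hg.ennreal_ofReal.aemeasurable
    (ae_of_all _ fun x ↦ (ENNReal.ofReal_pos.2 (hg_pos x)).ne')
    (ae_of_all _ fun _ ↦ ENNReal.ofReal_ne_top)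
  filter_upwards [hfg, Measure.rnDeriv_withDensity μ hf.ennreal_ofReal] with x hfgx hfx
  simp only [llr_def]
  rw [hfgx, hfx, ENNReal.toReal_mul, ENNReal.toReal_inv,
    ENNReal.toReal_ofReal (hf_pos x).le, ENNReal.toReal_ofReal (hg_pos x).le,
    Real.log_mul (inv_ne_zero (hg_pos x).ne') (hf_pos x).ne', Real.log_inv]
  ring

lemma pi_withDensity_ofReal {ι : Type*} [Fintype ι] {X : ι → Type*} [∀ i, MeasurableSpace (X i)]
    {μ : ∀ i, Measure (X i)} [∀ i, SigmaFinite (μ i)] {f : ∀ i, X i → ℝ}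
    (hf : ∀ i, Integrable (f i) (μ i)) (hf_nonneg : ∀ i x, 0 ≤ f i x) :
    Measure.pi (fun i ↦ (μ i).withDensity fun x ↦ ENNReal.ofReal (f i x)) =
      (Measure.pi μ).withDensity fun x ↦ ENNReal.ofReal (∏ i, f i (x i)) := by
  refine Measure.pi_eq fun s hs ↦ ?_
  have hint (i : ι) : ∫⁻ x in s i, ENNReal.ofReal (f i x) ∂μ i =
      ENNReal.ofReal (∫ x in s i, f i x ∂μ i) :=
    (ofReal_integral_eq_lintegral_ofReal (hf i).restrict (ae_of_all _ (hf_nonneg i))).symm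
  simp only [withDensity_apply _ (MeasurableSet.univ_pi hs), withDensity_apply _ (hs _), hint]
  rw [Measure.restrict_pi_pi, ← ofReal_integral_eq_lintegral_ofReal
      (Integrable.fintype_prod_dep fun i ↦ (hf i).restrict)
      (ae_of_all _ fun x ↦ Finset.prod_nonneg fun i _ ↦ hf_nonneg i (x i)),
    integral_fintype_prod_eq_prod, ENNReal.ofReal_prod_of_nonneg
      fun i _ ↦ integral_nonneg (hf_nonneg i)]

end WithDensity

section QuadraticForm

variable {Ω ι : Type*} [MeasurableSpace Ω] {P : Measure Ω} [Fintype ι] {X : Ω → ι → ℝ}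

lemma integrable_sub_dotProduct_mulVec_sub [IsFiniteMeasure P]
    (hX : ∀ i, MemLp (fun ω ↦ X ω i) 2 P) (A : Matrix ι ι ℝ) (c : ι → ℝ) :
    Integrable (fun ω ↦ (X ω - c) ⬝ᵥ A *ᵥ (X ω - c)) P := by
  simp only [dotProduct, mulVec, Finset.mul_sum, Pi.sub_apply]
  have hXc (i : ι) : MemLp (fun ω ↦ X ω i - c i) 2 P := (hX i).sub (memLp_const _)
  exact integrable_finsetSum _ fun i _ ↦ integrable_finsetSum _ fun j _ ↦
    (hXc i).integrable_mul ((hXc j).const_mul (A i j))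

variable [IsProbabilityMeasure P]

lemma integral_sub_mul_sub_eq_covariance_add {X Y : Ω → ℝ} (hX : MemLp X 2 P) (hY : MemLp Y 2 P)
    (a b : ℝ) :
    ∫ ω, (X ω - a) * (Y ω - b) ∂P = cov[X, Y; P] + (P[X] - a) * (P[Y] - b) := by
  have hX_int := hX.integrable one_le_two
  have hY_int := hY.integrable one_le_two
  have hcov : cov[fun ω ↦ X ω - a, fun ω ↦ Y ω - b; P] = cov[X, Y; P] :=
    (covariance_sub_const_left hX_int a).trans (covariance_sub_const_right hY_int b)
  have hmean {Z : Ω → ℝ} (hZ : Integrable Z P) (c : ℝ) : ∫ ω, (Z ω - c) ∂P = P[Z] - c := by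
    rw [integral_sub hZ (integrable_const c), integral_const, probReal_univ, one_smul]
  rw [← hcov, ← hmean hX_int, ← hmean hY_int,
    covariance_eq_sub (X := fun ω ↦ X ω - a) (Y := fun ω ↦ Y ω - b) (hX.sub (memLp_const a))
      (hY.sub (memLp_const b)), sub_add_cancel]
  rfl

lemma integral_sub_dotProduct_mulVec_sub (hX : ∀ i, MemLp (fun ω ↦ X ω i) 2 P)
    {m : ι → ℝ} (hm : ∀ i, ∫ ω, X ω i ∂P = m i) {S : Matrix ι ι ℝ}
    (hS : ∀ i j, cov[fun ω ↦ X ω i, fun ω ↦ X ω j; P] = S i j)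
    (A : Matrix ι ι ℝ) (c : ι → ℝ) :
    ∫ ω, (X ω - c) ⬝ᵥ A *ᵥ (X ω - c) ∂P = (A * S).trace + (m - c) ⬝ᵥ A *ᵥ (m - c) := by
  have hXc (i : ι) : MemLp (fun ω ↦ X ω i - c i) 2 P := (hX i).sub (memLp_const _)
  have hS_symm : S.IsSymm := IsSymm.ext fun i j ↦ by rw [← hS, ← hS, covariance_comm]
  have hint (i j : ι) : Integrable (fun ω ↦ A i j * ((X ω i - c i) * (X ω j - c j))) P :=
    ((hXc i).integrable_mul (hXc j)).const_mul (A i j)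
  calc ∫ ω, (X ω - c) ⬝ᵥ A *ᵥ (X ω - c) ∂P
    _ = ∫ ω, ∑ i, ∑ j, A i j * ((X ω i - c i) * (X ω j - c j)) ∂P := by
      simp only [dotProduct, mulVec, Finset.mul_sum, Pi.sub_apply, mul_left_comm]
    _ = ∑ i, ∑ j, A i j * (S j i + (m i - c i) * (m j - c j)) := by
      rw [integral_finsetSum _ fun i _ ↦ integrable_finsetSum _ fun j _ ↦ hint i j]
      refine Finset.sum_congr rfl fun i _ ↦ ?_
      rw [integral_finsetSum _ fun j _ ↦ hint i j]
      simp only [integral_const_mul, integral_sub_mul_sub_eq_covariance_add (hX _) (hX _), hS, hm,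
        hS_symm.apply i]
    _ = (A * S).trace + (m - c) ⬝ᵥ A *ᵥ (m - c) := by
      simp only [trace, diag_apply, mul_apply, dotProduct, mulVec, Finset.mul_sum,
        Pi.sub_apply, mul_left_comm, mul_add, Finset.sum_add_distrib]

end QuadraticForm

section MultiGaussian

variable {d : ℕ}

/-- The density of `N(m, S)` with respect to Lebesgue measure, for positive definite `S`;
it vanishes identically when `det S ≤ 0`. -/
noncomputable def multiGaussianPDFReal (m : Fin d → ℝ) (S : Matrix (Fin d) (Fin d) ℝ)
    (x : Fin d → ℝ) : ℝ :=
  (Real.sqrt ((2 * Real.pi) ^ d * S.det))⁻¹ *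
    Real.exp (-(1 / 2 : ℝ) * ((x - m) ⬝ᵥ S⁻¹ *ᵥ (x - m)))

lemma multiGaussian_eq_withDensity (m : Fin d → ℝ) (S : Matrix (Fin d) (Fin d) ℝ) :
    multiGaussian m S = volume.withDensity fun x ↦ ENNReal.ofReal (multiGaussianPDFReal m S x) :=
  rfl

lemma measurable_multiGaussianPDFReal (m : Fin d → ℝ) (S : Matrix (Fin d) (Fin d) ℝ) :
    Measurable (multiGaussianPDFReal m S) := by
  unfold multiGaussianPDFReal
  exact Continuous.measurable (by fun_prop)

lemma multiGaussianPDFReal_pos (m : Fin d → ℝ) {S : Matrix (Fin d) (Fin d) ℝ} (hS : 0 < S.det)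
    (x : Fin d → ℝ) : 0 < multiGaussianPDFReal m S x := by
  unfold multiGaussianPDFReal
  positivity

lemma log_multiGaussianPDFReal (m : Fin d → ℝ) {S : Matrix (Fin d) (Fin d) ℝ} (hS : 0 < S.det)
    (x : Fin d → ℝ) :
    Real.log (multiGaussianPDFReal m S x) =
      -(1 / 2 : ℝ) * (d * Real.log (2 * Real.pi) + Real.log S.det
        + (x - m) ⬝ᵥ S⁻¹ *ᵥ (x - m)) := by
  rw [multiGaussianPDFReal, Real.log_mul (by positivity) (by positivity), Real.log_exp,
    Real.log_inv, Real.log_sqrt (by positivity), Real.log_mul (by positivity) hS.ne', Real.log_pow]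
  ring

lemma multiGaussianPDFReal_zero_one (x : Fin d → ℝ) :
    multiGaussianPDFReal 0 1 x = ∏ i, gaussianPDFReal 0 1 (x i) := by
  have hsqrt : Real.sqrt ((2 * Real.pi) ^ d) = Real.sqrt (2 * Real.pi) ^ d :=
    (Real.sqrt_eq_iff_mul_self_eq (by positivity) (by positivity)).2
      (by rw [← mul_pow, Real.mul_self_sqrt (by positivity)])
  simp only [multiGaussianPDFReal, gaussianPDFReal, Finset.prod_mul_distrib, ← Real.exp_sum,
    Finset.prod_const, Finset.card_univ, Fintype.card_fin, det_one, sub_zero, inv_one, one_mulVec,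
    mul_one, NNReal.coe_one, dotProduct, hsqrt, inv_pow, Finset.mul_sum]
  congr! 3
  ring

lemma multiGaussianPDFReal_affine (m n : Fin d → ℝ) (S : Matrix (Fin d) (Fin d) ℝ)
    {R : Matrix (Fin d) (Fin d) ℝ} (hR : R.det ≠ 0) (x : Fin d → ℝ) :
    multiGaussianPDFReal (n + R *ᵥ m) (R * S * Rᵀ) (n + R *ᵥ x) =
      |R.det|⁻¹ * multiGaussianPDFReal m S x := by
  have hquad : (R *ᵥ (x - m)) ⬝ᵥ (R * S * Rᵀ)⁻¹ *ᵥ (R *ᵥ (x - m)) =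
      (x - m) ⬝ᵥ S⁻¹ *ᵥ (x - m) := by
    have hinv : Rᵀ * (R * S * Rᵀ)⁻¹ * R = S⁻¹ := by
      rw [Matrix.mul_inv_rev, Matrix.mul_inv_rev,
        mul_nonsing_inv_cancel_left _ _ (by simpa using hR),
        nonsing_inv_mul_cancel_right _ _ hR.isUnit]
    rw [← hinv, ← mulVec_mulVec, ← mulVec_mulVec, dotProduct_mulVec (x - m), vecMul_transpose]
  have hdet : (2 * Real.pi) ^ d * (R * S * Rᵀ).det = R.det ^ 2 * ((2 * Real.pi) ^ d * S.det) := by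
    rw [det_mul, det_mul, det_transpose]
    ring
  rw [multiGaussianPDFReal, add_sub_add_left_eq_sub, ← mulVec_sub, hquad, hdet,
    Real.sqrt_mul (sq_nonneg _), Real.sqrt_sq_eq_abs, mul_inv, mul_assoc, multiGaussianPDFReal]

lemma volume_map_affine (n : Fin d → ℝ) {R : Matrix (Fin d) (Fin d) ℝ} (hR : R.det ≠ 0) :
    (volume : Measure (Fin d → ℝ)).map (fun x ↦ n + R *ᵥ x) =
      ENNReal.ofReal |R.det|⁻¹ • volume := by
  have hcomp : (fun x ↦ n + R *ᵥ x) = (n + ·) ∘ toLin' R := rfl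
  rw [hcomp, ← Measure.map_map (measurable_const_add n) (LinearMap.continuous_on_pi _).measurable,
    Real.map_matrix_volume_pi_eq_smul_volume_pi hR, Measure.map_smul, map_add_left_eq_self, abs_inv]

lemma map_affine_multiGaussian (m n : Fin d → ℝ) (S : Matrix (Fin d) (Fin d) ℝ)
    {R : Matrix (Fin d) (Fin d) ℝ} (hR : R.det ≠ 0) :
    (multiGaussian m S).map (fun x ↦ n + R *ᵥ x) =
      multiGaussian (n + R *ᵥ m) (R * S * Rᵀ) := by
  have hT : Measurable fun x : Fin d → ℝ ↦ n + R *ᵥ x := Continuous.measurable (by fun_prop)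
  set g : (Fin d → ℝ) → ENNReal :=
    fun y ↦ ENNReal.ofReal (multiGaussianPDFReal (n + R *ᵥ m) (R * S * Rᵀ) y)
  have hg : Measurable g := (measurable_multiGaussianPDFReal _ _).ennreal_ofReal
  set c := ENNReal.ofReal |R.det|
  have hc : c * ENNReal.ofReal |R.det|⁻¹ = 1 := by
    rw [← ENNReal.ofReal_mul (abs_nonneg _), mul_inv_cancel₀ (abs_ne_zero.2 hR),
      ENNReal.ofReal_one]
  have hpull : (fun x ↦ ENNReal.ofReal (multiGaussianPDFReal m S x)) =
      c • (g ∘ fun x ↦ n + R *ᵥ x) := by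
    ext x
    simp only [g, Pi.smul_apply, Function.comp_apply, smul_eq_mul,
      multiGaussianPDFReal_affine m n S hR]
    rw [ENNReal.ofReal_mul (by positivity), ← mul_assoc, hc, one_mul]
  rw [multiGaussian_eq_withDensity, hpull, withDensity_smul _ (hg.comp hT), Measure.map_smul,
    ← withDensity_map hT hg, volume_map_affine n hR, withDensity_smul_measure, smul_smul, hc,
    one_smul, multiGaussian_eq_withDensity]

lemma multiGaussian_zero_one :
    multiGaussian (0 : Fin d → ℝ) 1 = Measure.pi fun _ ↦ gaussianReal 0 1 := by
  simp only [multiGaussian_eq_withDensity, multiGaussianPDFReal_zero_one,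
    gaussianReal_of_var_ne_zero 0 one_ne_zero, gaussianPDF_def]
  exact (pi_withDensity_ofReal (fun _ ↦ integrable_gaussianPDFReal 0 1)
    fun _ ↦ gaussianPDFReal_nonneg 0 1).symm

lemma multiGaussian_eq_map_multivariateGaussian (m : Fin d → ℝ) {S : Matrix (Fin d) (Fin d) ℝ}
    (hS : S.PosDef) :
    multiGaussian m S = (multivariateGaussian (WithLp.toLp 2 m) S).map WithLp.ofLp := by
  set R := CFC.sqrt S
  have hRR : R * R = S := CFC.sqrt_mul_sqrt_self S hS.posSemidef.nonneg
  have hRt : Rᵀ = R := by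
    simpa [star_eq_conjTranspose] using (CFC.sqrt_nonneg S).isSelfAdjoint.star_eq
  have hR : R.det ≠ 0 := fun h ↦ hS.det_pos.ne' (by rw [← hRR, det_mul, h, zero_mul])
  have hstd : multiGaussian m S = (multiGaussian 0 1).map fun x ↦ m + R *ᵥ x := by
    rw [map_affine_multiGaussian 0 m 1 hR, mulVec_zero, add_zero, Matrix.mul_one, hRt, hRR]
  rw [hstd, multiGaussian_zero_one, multivariateGaussian, ← map_pi_eq_stdGaussian,
    Measure.map_map (by fun_prop) (by fun_prop), Measure.map_map (by fun_prop) (by fun_prop)]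
  congr 1

lemma isProbabilityMeasure_multiGaussian (m : Fin d → ℝ) {S : Matrix (Fin d) (Fin d) ℝ}
    (hS : S.PosDef) : IsProbabilityMeasure (multiGaussian m S) := by
  rw [multiGaussian_eq_map_multivariateGaussian m hS]
  exact Measure.isProbabilityMeasure_map (by fun_prop)

lemma memLp_eval_multiGaussian (m : Fin d → ℝ) {S : Matrix (Fin d) (Fin d) ℝ} (hS : S.PosDef)
    (i : Fin d) : MemLp (fun x ↦ x i) 2 (multiGaussian m S) := by
  rw [multiGaussian_eq_map_multivariateGaussian m hS,
    memLp_map_measure_iff (Measurable.aestronglyMeasurable (by fun_prop)) (by fun_prop)]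
  exact (EuclideanSpace.proj (𝕜 := ℝ) i).comp_memLp' IsGaussian.memLp_two_id

lemma integral_eval_multiGaussian (m : Fin d → ℝ) {S : Matrix (Fin d) (Fin d) ℝ} (hS : S.PosDef)
    (i : Fin d) : ∫ x, x i ∂multiGaussian m S = m i := by
  rw [multiGaussian_eq_map_multivariateGaussian m hS, integral_map (by fun_prop)
    (Measurable.aestronglyMeasurable (by fun_prop))]
  exact ((EuclideanSpace.proj (𝕜 := ℝ) i).integral_comp_id_comm IsGaussian.integrable_id).trans
    (by simp)

lemma covariance_eval_multiGaussian (m : Fin d → ℝ) {S : Matrix (Fin d) (Fin d) ℝ} (hS : S.PosDef)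
    (i j : Fin d) : cov[fun x ↦ x i, fun x ↦ x j; multiGaussian m S] = S i j := by
  rw [multiGaussian_eq_map_multivariateGaussian m hS,
    covariance_map (Measurable.aestronglyMeasurable (by fun_prop))
      (Measurable.aestronglyMeasurable (by fun_prop)) (by fun_prop)]
  exact covariance_eval_multivariateGaussian hS.posSemidef i j

lemma llr_multiGaussian (m n : Fin d → ℝ) {S T : Matrix (Fin d) (Fin d) ℝ} (hS : 0 < S.det)
    (hT : 0 < T.det) :
    llr (multiGaussian m S) (multiGaussian n T) =ᵐ[multiGaussian m S] fun x ↦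
      (1 / 2 : ℝ) * (Real.log T.det - Real.log S.det + ((x - n) ⬝ᵥ T⁻¹ *ᵥ (x - n)
        - (x - m) ⬝ᵥ S⁻¹ *ᵥ (x - m))) := by
  have hac : multiGaussian m S ≪ volume := withDensity_absolutelyContinuous _ _
  have hllr := llr_withDensity_ofReal (μ := volume) (measurable_multiGaussianPDFReal m S)
    (measurable_multiGaussianPDFReal n T) (multiGaussianPDFReal_pos m hS)
    (multiGaussianPDFReal_pos n hT)
  filter_upwards [hac.ae_le hllr] with x hx
  rw [multiGaussian_eq_withDensity, multiGaussian_eq_withDensity, hx,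
    log_multiGaussianPDFReal m hS, log_multiGaussianPDFReal n hT]
  ring

theorem klDiv_multiGaussian (m n : Fin d → ℝ) {S T : Matrix (Fin d) (Fin d) ℝ} (hS : S.PosDef)
    (hT : T.PosDef) :
    klDiv (multiGaussian m S) (multiGaussian n T) =
      (1 / 2 : ℝ) * ((m - n) ⬝ᵥ T⁻¹ *ᵥ (m - n) + (Real.log T.det - Real.log S.det)
        + ((T⁻¹ * S).trace - d)) := by
  have := isProbabilityMeasure_multiGaussian m hS
  have hquad_integrable (A : Matrix (Fin d) (Fin d) ℝ) (c : Fin d → ℝ) :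
      Integrable (fun x ↦ (x - c) ⬝ᵥ A *ᵥ (x - c)) (multiGaussian m S) :=
    integrable_sub_dotProduct_mulVec_sub (memLp_eval_multiGaussian m hS) A c
  have hquad_sub_integrable : Integrable
      (fun x ↦ (x - n) ⬝ᵥ T⁻¹ *ᵥ (x - n) - (x - m) ⬝ᵥ S⁻¹ *ᵥ (x - m)) (multiGaussian m S) :=
    (hquad_integrable _ _).sub (hquad_integrable _ _)
  have hquad (A : Matrix (Fin d) (Fin d) ℝ) (c : Fin d → ℝ) :
      ∫ x, (x - c) ⬝ᵥ A *ᵥ (x - c) ∂multiGaussian m S =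
        (A * S).trace + (m - c) ⬝ᵥ A *ᵥ (m - c) :=
    integral_sub_dotProduct_mulVec_sub (memLp_eval_multiGaussian m hS)
      (integral_eval_multiGaussian m hS) (covariance_eval_multiGaussian m hS) A c
  have htrace : (S⁻¹ * S).trace = d := by
    rw [nonsing_inv_mul S hS.det_pos.ne'.isUnit, trace_one, Fintype.card_fin]
  calc klDiv (multiGaussian m S) (multiGaussian n T)
    _ = ∫ x, (1 / 2 : ℝ) * (Real.log T.det - Real.log S.det + ((x - n) ⬝ᵥ T⁻¹ *ᵥ (x - n)
          - (x - m) ⬝ᵥ S⁻¹ *ᵥ (x - m))) ∂multiGaussian m S :=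
      integral_congr_ae (llr_multiGaussian m n hS.det_pos hT.det_pos)
    _ = (1 / 2 : ℝ) * (Real.log T.det - Real.log S.det
          + ((T⁻¹ * S).trace + (m - n) ⬝ᵥ T⁻¹ *ᵥ (m - n) - d)) := by
      rw [integral_const_mul, integral_add (integrable_const _) hquad_sub_integrable,
        integral_sub (hquad_integrable _ _) (hquad_integrable _ _), hquad, hquad, htrace,
        integral_const, probReal_univ, one_smul, sub_self, zero_dotProduct, add_zero]
    _ = _ := by ring

end MultiGaussian

/-- closed form of the KL divergence between the decoupled
variational posterior `q = N(Ψα a, (I + Ψβ B Ψβᵀ)⁻¹)` and the normal prior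
`p = N(0, I)`, where `K_α = Ψαᵀ Ψα` and `K_β = Ψβᵀ Ψβ`. -/
theorem stmt_2 (d Mα Mβ : ℕ) (hd : 1 ≤ d) (hMα : 1 ≤ Mα) (hMβ : 1 ≤ Mβ)
    (Ψα : Matrix (Fin d) (Fin Mα) ℝ) (Ψβ : Matrix (Fin d) (Fin Mβ) ℝ)
    (a : Fin Mα → ℝ) (B : Matrix (Fin Mβ) (Fin Mβ) ℝ) (hB : B.PosDef) :
    klDiv (multiGaussian (Ψα.mulVec a) ((1 + Ψβ * B * Ψβᵀ)⁻¹))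
        (multiGaussian 0 1) =
      (1 / 2 : ℝ) * (a ⬝ᵥ (Ψαᵀ * Ψα).mulVec a)
        + (1 / 2 : ℝ) * Real.log (1 + (Ψβᵀ * Ψβ) * B).det
        - (1 / 2 : ℝ) * ((Ψβᵀ * Ψβ) * (B⁻¹ + Ψβᵀ * Ψβ)⁻¹).trace := by
  have hK : (Ψβᵀ * Ψβ).PosSemidef := by simpa using posSemidef_conjTranspose_mul_self Ψβ
  have hA : (1 + Ψβ * B * Ψβᵀ).PosDef :=
    PosDef.one.add_posSemidef (by simpa using hB.posSemidef.mul_mul_conjTranspose_same Ψβ)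
  have hmean : Ψα *ᵥ a ⬝ᵥ Ψα *ᵥ a = a ⬝ᵥ (Ψαᵀ * Ψα) *ᵥ a := by
    rw [← mulVec_mulVec, dotProduct_mulVec a, vecMul_transpose]
  have hdet : (1 + Ψβ * B * Ψβᵀ).det = (1 + Ψβᵀ * Ψβ * B).det := by
    rw [det_one_add_mul_comm, Matrix.mul_assoc]
  have htrace := trace_inv_one_add_mul_mul Ψβ Ψβᵀ hB.isUnit (hB.inv.add_posSemidef hK).isUnit
  rw [klDiv_multiGaussian _ _ hA.inv .one, sub_zero, inv_one, one_mulVec, Matrix.one_mul, det_one,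
    Real.log_one, det_nonsing_inv, Ring.inverse_eq_inv', Real.log_inv, hmean, hdet, htrace,
    Fintype.card_fin]
  ring
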